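/- The following 19-point positive cubature rule of index 5 with rational data holds on the 3-dimensional simplex: for every homogeneous polynomial f of degree 5 in 4 variables, 3! · ∫_{T^3} f(x_1,x_2,x_3, 1−x_1−x_2−x_3) dx = (16/105)·f(1/4, 1/4, 1/4, 1/4) + (1/70)·avg f over the 4 distinct coordinate permutations of (1, 0, 0, 0) + (4/35)·avg f over the 6 distinct coordinate permutations of (1/2, 1/2, 0, 0) + (81/350)·avg f over the 4 distinct coordinate permutations of (1/3, 1/3, 1/3, 0) + (256/525)·avg f over the 4 distinct coordinate permutations of (5/8, 1/8, 1/8, 1/8), where avg denotes the arithmetic mean of the values of f over the listed points. -/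

import Mathlib

open MeasureTheory Finset

/-- The standard simplex `T^d` in `ℝ^d`. -/
def Td (d : ℕ) : Set (Fin d → ℝ) :=
  {x | (∀ i, 0 ≤ x i) ∧ ∑ i, x i ≤ 1}

/-- The weight function `W_γ(x) = (x_1 ⋯ x_d (1 - |x|₁))^γ` on `T^d`. -/
noncomputable def Wg (d : ℕ) (γ : ℝ) (x : Fin d → ℝ) : ℝ :=
  ((∏ i, x i) * (1 - ∑ i, x i)) ^ γ

/-- The normalization constant `w_γ = Γ((d+1)(γ+1)) / Γ(γ+1)^(d+1)`. -/
noncomputable def wg (d : ℕ) (γ : ℝ) : ℝ :=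
  Real.Gamma ((d + 1) * (γ + 1)) / (Real.Gamma (γ + 1)) ^ (d + 1)

/-- Homogeneous coordinates: `x ↦ (x, 1 - |x|₁) ∈ 𝒯^{d+1}`. -/
noncomputable def lift (d : ℕ) (x : Fin d → ℝ) : Fin (d + 1) → ℝ :=
  Fin.snoc x (1 - ∑ i, x i)

/-- The average of `f` over the set of distinct coordinate permutations of `y`. -/
noncomputable def orbitAvg (d : ℕ) (y : Fin (d + 1) → ℝ) (f : (Fin (d + 1) → ℝ) → ℝ) : ℝ :=
  ((Finset.image (fun σ : Equiv.Perm (Fin (d + 1)) => y ∘ σ) Finset.univ).card : ℝ)⁻¹ *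
    ∑ z ∈ Finset.image (fun σ : Equiv.Perm (Fin (d + 1)) => y ∘ σ) Finset.univ, f z

/-!
Both sides of a cubature rule whose nodes form full permutation orbits are linear functionals of
`f` invariant under permutations of the barycentric coordinates. On homogeneous polynomials of
degree `5` they therefore agree as soon as they agree on the monomials with decreasing exponents,
that is, on the six partitions of `5` into at most four parts.

Slicing the simplex by hyperplanes reduces the moments to beta integrals (Dirichlet's formula). On
the rule's side, the average of a monomial over the barycentres of the faces with `k` vertices
counts the `k`-sets of coordinates containing the support of the monomial.
-/

open MvPolynomial (X)

section BetaIntegral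

theorem integral_zero_one_pow_mul_one_sub_pow (a b : ℕ) :
    ∫ x in (0 : ℝ)..1, x ^ a * (1 - x) ^ b
      = (a.factorial * b.factorial : ℝ) / (a + b + 1).factorial := by
  have hΓ := Complex.betaIntegral_eq_Gamma_mul_div (a + 1) (b + 1)
    (by norm_cast; positivity) (by norm_cast; positivity)
  rw [show (a + 1 + (b + 1) : ℂ) = (a + b + 1 : ℕ) + 1 by push_cast; ring] at hΓ
  simp only [Complex.betaIntegral, add_sub_cancel_right, Complex.cpow_natCast,
    Complex.Gamma_nat_eq_factorial] at hΓ
  rw [← Complex.ofReal_inj, ← intervalIntegral.integral_ofReal]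
  push_cast
  exact hΓ

theorem integral_zero_pow_mul_sub_pow (t : ℝ) (a b : ℕ) :
    ∫ x in (0 : ℝ)..t, x ^ a * (t - x) ^ b
      = (a.factorial * b.factorial : ℝ) / (a + b + 1).factorial * t ^ (a + b + 1) := by
  have hscale (x : ℝ) :
      (t * x) ^ a * (t - t * x) ^ b = t ^ (a + b) * (x ^ a * (1 - x) ^ b) := by
    rw [← mul_one_sub, mul_pow, mul_pow]
    ring
  calc ∫ x in (0 : ℝ)..t, x ^ a * (t - x) ^ b
      = t * ∫ x in (0 : ℝ)..1, (t * x) ^ a * (t - t * x) ^ b := by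
        rw [intervalIntegral.mul_integral_comp_mul_left (f := fun x => x ^ a * (t - x) ^ b),
          mul_zero, mul_one]
    _ = (a.factorial * b.factorial : ℝ) / (a + b + 1).factorial * t ^ (a + b + 1) := by
        simp only [hscale, intervalIntegral.integral_const_mul,
          integral_zero_one_pow_mul_one_sub_pow]
        ring

end BetaIntegral

section DirichletIntegral

/-- The solid simplex of size `t`: the simplex `Td d` is `scaledSimplex d 1`, and the slices of
`scaledSimplex (d + 1) t` by hyperplanes `x 0 = y` are the simplices `scaledSimplex d (t - y)`. -/
def scaledSimplex (d : ℕ) (t : ℝ) : Set (Fin d → ℝ) :=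
  {x | (∀ i, 0 ≤ x i) ∧ ∑ i, x i ≤ t}

variable {d : ℕ} {t : ℝ}

theorem isCompact_scaledSimplex (d : ℕ) (t : ℝ) : IsCompact (scaledSimplex d t) := by
  refine (isCompact_Icc (a := (0 : Fin d → ℝ)) (b := fun _ => t)).of_isClosed_subset ?_ ?_
  · refine (isClosed_le continuous_const continuous_id : IsClosed {x : Fin d → ℝ | 0 ≤ x}).inter ?_
    exact isClosed_le (continuous_finsetSum _ fun i _ => continuous_apply i) continuous_const
  · rintro x ⟨hx, hsum⟩
    exact ⟨hx, fun i => (single_le_sum (fun j _ => hx j) (mem_univ i)).trans hsum⟩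

theorem measurableSet_scaledSimplex (d : ℕ) (t : ℝ) : MeasurableSet (scaledSimplex d t) :=
  (isCompact_scaledSimplex d t).measurableSet

theorem cons_mem_scaledSimplex {y : ℝ} {x : Fin d → ℝ} :
    (Fin.cons y x : Fin (d + 1) → ℝ) ∈ scaledSimplex (d + 1) t
      ↔ 0 ≤ y ∧ x ∈ scaledSimplex d (t - y) := by
  simp [scaledSimplex, Fin.forall_fin_succ, Fin.sum_univ_succ, and_assoc, le_sub_iff_add_le']

theorem nonneg_of_mem_scaledSimplex {x : Fin d → ℝ} (hx : x ∈ scaledSimplex d t) : 0 ≤ t :=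
  (sum_nonneg fun i _ => hx.1 i).trans hx.2

theorem integral_indicator_scaledSimplex_cons {E : Type*} [NormedAddCommGroup E]
    [NormedSpace ℝ E] (g : (Fin (d + 1) → ℝ) → E) (y : ℝ) :
    ∫ x, (scaledSimplex (d + 1) t).indicator g (Fin.cons y x)
      = (Set.Icc 0 t).indicator
          (fun y => ∫ x in scaledSimplex d (t - y), g (Fin.cons y x)) y := by
  by_cases hy : y ∈ Set.Icc 0 t
  · rw [Set.indicator_of_mem hy, ← integral_indicator (measurableSet_scaledSimplex _ _)]
    refine integral_congr_ae (.of_forall fun x => ?_)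
    classical simp only [Set.indicator_apply, cons_mem_scaledSimplex, hy.1, true_and]
  · have hslice (x : Fin d → ℝ) : Fin.cons y x ∉ scaledSimplex (d + 1) t := fun hx =>
      have ⟨hy₀, hx'⟩ := cons_mem_scaledSimplex.1 hx
      hy ⟨hy₀, sub_nonneg.1 (nonneg_of_mem_scaledSimplex hx')⟩
    simp [hslice, hy]

theorem integral_scaledSimplex_succ {E : Type*} [NormedAddCommGroup E] [NormedSpace ℝ E]
    {g : (Fin (d + 1) → ℝ) → E} (ht : 0 ≤ t) (hg : IntegrableOn g (scaledSimplex (d + 1) t)) :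
    ∫ x in scaledSimplex (d + 1) t, g x
      = ∫ y in (0 : ℝ)..t, ∫ x in scaledSimplex d (t - y), g (Fin.cons y x) := by
  set G := (scaledSimplex (d + 1) t).indicator g
  have hG : Integrable G := hg.integrable_indicator (measurableSet_scaledSimplex _ _)
  let e := (MeasurableEquiv.piFinSuccAbove (fun _ : Fin (d + 1) => ℝ) 0).symm
  have he : MeasurePreserving e := (volume_preserving_piFinSuccAbove _ 0).symm
  have hcons (y : ℝ) (x : Fin d → ℝ) : e (y, x) = Fin.cons y x := by
    simp [e, MeasurableEquiv.piFinSuccAbove, Fin.insertNthEquiv]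
  calc ∫ x in scaledSimplex (d + 1) t, g x
      = ∫ p, G (e p) := by
        rw [he.integral_comp', integral_indicator (measurableSet_scaledSimplex _ _)]
    _ = ∫ y, ∫ x, G (Fin.cons y x) := by
        rw [Measure.volume_eq_prod, integral_prod]
        · simp only [hcons]
        · exact (he.integrable_comp_emb e.measurableEmbedding).2 hG
    _ = ∫ y in (0 : ℝ)..t, ∫ x in scaledSimplex d (t - y), g (Fin.cons y x) := by
        simp only [G, integral_indicator_scaledSimplex_cons]
        rw [integral_indicator measurableSet_Icc, integral_Icc_eq_integral_Ioc,
          ← intervalIntegral.integral_of_le ht]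

theorem integral_scaledSimplex_prod_pow_mul_sub_sum_pow (a : Fin d → ℕ) (b : ℕ) (ht : 0 ≤ t) :
    ∫ x in scaledSimplex d t, (∏ i, x i ^ a i) * (t - ∑ i, x i) ^ b
      = ((∏ i, ((a i).factorial : ℝ)) * b.factorial) / (∑ i, a i + b + d).factorial
        * t ^ (∑ i, a i + b + d) := by
  induction d generalizing t with
  | zero =>
    have huniv : scaledSimplex 0 t = Set.univ := by ext; simp [scaledSimplex, ht]
    have hb : (b.factorial : ℝ) ≠ 0 := mod_cast b.factorial_ne_zero
    simp [huniv, hb, volume_pi, Measure.pi_of_empty _ (0 : Fin 0 → ℝ)]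
  | succ d ih =>
    set N := ∑ i : Fin d, a i.succ + b + d with hN
    set C := ((∏ i : Fin d, ((a i.succ).factorial : ℝ)) * b.factorial) / N.factorial with hC
    have hslice : ∀ y ∈ Set.uIcc 0 t,
        ∫ x in scaledSimplex d (t - y),
            (∏ i, (Fin.cons y x : Fin (d + 1) → ℝ) i ^ a i)
              * (t - ∑ i, (Fin.cons y x : Fin (d + 1) → ℝ) i) ^ b
          = C * (y ^ a 0 * (t - y) ^ N) := by
      intro y hy
      rw [Set.uIcc_of_le ht] at hy
      simp only [Fin.prod_univ_succ, Fin.sum_univ_succ, Fin.cons_zero, Fin.cons_succ, mul_assoc,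
        ← sub_sub, integral_const_mul, ih (fun i => a i.succ) (sub_nonneg.2 hy.2)]
      ring
    have hNfact : (N.factorial : ℝ) ≠ 0 := mod_cast N.factorial_ne_zero
    have hdeg : a 0 + ∑ i : Fin d, a i.succ + b + (d + 1) = a 0 + N + 1 := by rw [hN]; ring
    rw [integral_scaledSimplex_succ ht, intervalIntegral.integral_congr hslice,
      intervalIntegral.integral_const_mul, integral_zero_pow_mul_sub_pow, Fin.prod_univ_succ,
      Fin.sum_univ_succ, hdeg, hC]
    · field_simp
    · exact (by fun_prop : Continuous _).continuousOn.integrableOn_compact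
        (isCompact_scaledSimplex _ _)

theorem scaledSimplex_one (d : ℕ) : scaledSimplex d 1 = Td d := rfl

theorem integral_Td_prod_lift_pow (m : Fin (d + 1) → ℕ) :
    ∫ x in Td d, ∏ i, lift d x i ^ m i
      = (∏ i, ((m i).factorial : ℝ)) / (∑ i, m i + d).factorial := by
  have h := integral_scaledSimplex_prod_pow_mul_sub_sum_pow
    (fun i : Fin d => m i.castSucc) (m (Fin.last d)) zero_le_one
  simpa only [scaledSimplex_one, one_pow, mul_one, Fin.prod_univ_castSucc, Fin.sum_univ_castSucc,
    lift, Fin.snoc_castSucc, Fin.snoc_last] using h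

end DirichletIntegral

section SimplexMean

variable {d : ℕ}

theorem continuous_lift (d : ℕ) : Continuous (lift d) := by
  refine continuous_pi fun i => ?_
  induction i using Fin.lastCases with
  | last => simp only [lift, Fin.snoc_last]; fun_prop
  | cast i => simp only [lift, Fin.snoc_castSucc]; fun_prop

theorem integrableOn_eval_lift (f : MvPolynomial (Fin (d + 1)) ℝ) :
    IntegrableOn (fun x => MvPolynomial.eval (lift d x) f) (Td d) :=
  ((MvPolynomial.continuous_eval f).comp (continuous_lift d)).continuousOn.integrableOn_compact
    (isCompact_scaledSimplex d 1)

/-- The normalized integral over the simplex `Td d`, as a functional on polynomials in the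
barycentric coordinates. -/
noncomputable def simplexMean (d : ℕ) : MvPolynomial (Fin (d + 1)) ℝ →ₗ[ℝ] ℝ where
  toFun f := (d.factorial : ℝ) * ∫ x in Td d, MvPolynomial.eval (lift d x) f
  map_add' f g := by
    simp only [map_add]
    rw [integral_add (integrableOn_eval_lift f) (integrableOn_eval_lift g), mul_add]
  map_smul' c f := by
    simp only [MvPolynomial.smul_eval, integral_const_mul, RingHom.id_apply, smul_eq_mul,
      mul_left_comm]

theorem simplexMean_prod_X_pow (m : Fin (d + 1) → ℕ) :
    simplexMean d (∏ i, X i ^ m i)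
      = d.factorial * ((∏ i, ((m i).factorial : ℝ)) / (∑ i, m i + d).factorial) := by
  simp [simplexMean, integral_Td_prod_lift_pow]

theorem simplexMean_prod_X_pow_perm (e : Equiv.Perm (Fin (d + 1))) (m : Fin (d + 1) → ℕ) :
    simplexMean d (∏ i, X i ^ m (e i)) = simplexMean d (∏ i, X i ^ m i) := by
  rw [simplexMean_prod_X_pow, simplexMean_prod_X_pow, Equiv.sum_comp e m,
    Equiv.prod_comp e fun i => ((m i).factorial : ℝ)]

end SimplexMean

section OrbitMean

variable {d k : ℕ}

theorem orbitAvg_const (c : ℝ) (F : (Fin (d + 1) → ℝ) → ℝ) :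
    orbitAvg d (fun _ => c) F = F fun _ => c := by
  simp [orbitAvg, Function.comp_def, image_const]

theorem orbitAvg_comp_perm (e : Equiv.Perm (Fin (d + 1))) (y : Fin (d + 1) → ℝ)
    (F : (Fin (d + 1) → ℝ) → ℝ) : orbitAvg d y (fun z => F (z ∘ e)) = orbitAvg d y F := by
  unfold orbitAvg
  congr 1
  refine sum_equiv (e.symm.arrowCongr (Equiv.refl ℝ)) (fun z => ?_) fun z _ => rfl
  simp only [mem_image, mem_univ, true_and]
  constructor
  · rintro ⟨σ, rfl⟩
    exact ⟨e.trans σ, rfl⟩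
  · rintro ⟨σ, hσ⟩
    exact ⟨e.symm.trans σ, by ext i; simpa using congrFun hσ (e.symm i)⟩

/-- The orbit average as a functional on polynomials. -/
noncomputable def orbitMean (d : ℕ) (y : Fin (d + 1) → ℝ) :
    MvPolynomial (Fin (d + 1)) ℝ →ₗ[ℝ] ℝ where
  toFun f := orbitAvg d y fun z => MvPolynomial.eval z f
  map_add' f g := by simp [orbitAvg, sum_add_distrib, mul_add]
  map_smul' c f := by simp [orbitAvg, mul_sum, mul_left_comm]

theorem orbitMean_prod_X_pow (y : Fin (d + 1) → ℝ) (m : Fin (d + 1) → ℕ) :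
    orbitMean d y (∏ i, X i ^ m i) = orbitAvg d y fun z => ∏ i, z i ^ m i := by
  simp [orbitMean]

theorem orbitMean_prod_X_pow_perm (y : Fin (d + 1) → ℝ) (e : Equiv.Perm (Fin (d + 1)))
    (m : Fin (d + 1) → ℕ) :
    orbitMean d y (∏ i, X i ^ m (e i)) = orbitMean d y (∏ i, X i ^ m i) := by
  have hperm (z : Fin (d + 1) → ℝ) : ∏ i, z i ^ m (e i) = ∏ i, (z ∘ e.symm) i ^ m i := by
    simpa using Equiv.prod_comp e fun i => z (e.symm i) ^ m i
  simp only [orbitMean_prod_X_pow, hperm]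
  exact orbitAvg_comp_perm e.symm y fun z => ∏ i, z i ^ m i

theorem image_perm_ite_eq_image_powersetCard {α β : Type*} [Fintype α] [DecidableEq α]
    [DecidableEq β] {p : α → Prop} [DecidablePred p] (hp : #{i | p i} = k) (a b : β) :
    univ.image (fun σ : Equiv.Perm α => (fun i => if p i then a else b) ∘ σ)
      = (powersetCard k univ).image fun s i => if i ∈ s then a else b := by
  ext z
  simp only [mem_image, mem_univ, true_and, mem_powersetCard, subset_univ]
  constructor
  · rintro ⟨σ, rfl⟩
    refine ⟨({i | p i} : Finset α).map σ.symm.toEmbedding, by simp [hp], ?_⟩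
    ext i
    simp
  · rintro ⟨s, hs, rfl⟩
    have hcard : Fintype.card s = Fintype.card {i // p i} := by
      rw [Fintype.card_coe, Fintype.card_subtype, hs, hp]
    let e : {i // i ∈ s} ≃ {i // p i} := Fintype.equivOfCardEq hcard
    have he (i : α) : p (e.extendSubtype i) ↔ i ∈ s :=
      ⟨not_imp_not.1 (e.extendSubtype_not_mem i), e.extendSubtype_mem i⟩
    exact ⟨e.extendSubtype, by ext i; simp [he]⟩

theorem injective_ite_mem {α β : Type*} [DecidableEq α] {a b : β} (hab : a ≠ b) :
    Function.Injective fun (s : Finset α) (i : α) => if i ∈ s then a else b := by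
  intro s t hst
  ext i
  have := congrFun hst i
  by_cases i ∈ s <;> by_cases i ∈ t <;> simp_all

theorem card_filter_subset_powersetCard_univ {α : Type*} [Fintype α] [DecidableEq α]
    (hk : k ≤ Fintype.card α) (t : Finset α) :
    #{s ∈ powersetCard k univ | t ⊆ s} = (#tᶜ).choose (Fintype.card α - k) := by
  rw [← card_powersetCard]
  refine card_nbij' compl compl ?_ ?_ (fun s _ => compl_compl s) (fun s _ => compl_compl s)
  · intro s hs
    simp_all [card_compl]
  · intro s hs
    simp_all [card_compl, subset_compl_comm, Nat.sub_sub_self hk]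

section TwoValued

variable {p : Fin (d + 1) → Prop} [DecidablePred p] {a b : ℝ}

theorem orbitAvg_ite (hp : #{i | p i} = k) (hab : a ≠ b) (F : (Fin (d + 1) → ℝ) → ℝ) :
    orbitAvg d (fun i => if p i then a else b) F
      = ((d + 1).choose k : ℝ)⁻¹ *
          ∑ s ∈ powersetCard k univ, F fun i => if i ∈ s then a else b := by
  rw [orbitAvg, image_perm_ite_eq_image_powersetCard hp,
    card_image_of_injective _ (injective_ite_mem hab), sum_image (injective_ite_mem hab).injOn,
    card_powersetCard, card_univ, Fintype.card_fin]

theorem orbitMean_ite_prod_X_pow (hp : #{i | p i} = k) (hab : a ≠ b) (m : Fin (d + 1) → ℕ) :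
    orbitMean d (fun i => if p i then a else b) (∏ i, X i ^ m i)
      = ((d + 1).choose k : ℝ)⁻¹ *
          ∑ s ∈ powersetCard k univ, a ^ (∑ i ∈ s, m i) * b ^ (∑ i ∈ sᶜ, m i) := by
  rw [orbitMean_prod_X_pow, orbitAvg_ite hp hab]
  simp [ite_pow, prod_ite, prod_pow_eq_pow_sum, filter_not, compl_eq_univ_sdiff]

theorem orbitMean_ite_prod_X_pow_of_card_eq_one (hp : #{i | p i} = 1) (hab : a ≠ b) (hb : b ≠ 0)
    (m : Fin (d + 1) → ℕ) :
    orbitMean d (fun i => if p i then a else b) (∏ i, X i ^ m i)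
      = ((d : ℝ) + 1)⁻¹ * (b ^ (∑ i, m i) * ∑ j, (a / b) ^ m j) := by
  have hterm (j : Fin (d + 1)) :
      a ^ m j * b ^ (∑ i ∈ {j}ᶜ, m i) = b ^ (∑ i, m i) * (a / b) ^ m j := by
    rw [Fintype.sum_eq_add_sum_compl j, pow_add, div_pow]
    field_simp
  simp [orbitMean_ite_prod_X_pow hp hab, powersetCard_one, hterm, mul_sum]

theorem orbitMean_ite_zero_prod_X_pow (hp : #{i | p i} = k) (ha : a ≠ 0)
    (m : Fin (d + 1) → ℕ) :
    orbitMean d (fun i => if p i then a else 0) (∏ i, X i ^ m i)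
      = a ^ (∑ i, m i) * (#{i | m i = 0}).choose (d + 1 - k) / (d + 1).choose k := by
  have hterm (s : Finset (Fin (d + 1))) :
      a ^ (∑ i ∈ s, m i) * 0 ^ (∑ i ∈ sᶜ, m i)
        = if ({i | m i = 0} : Finset _)ᶜ ⊆ s then a ^ (∑ i, m i) else 0 := by
    have hsupp : ({i | m i = 0} : Finset _)ᶜ ⊆ s ↔ ∑ i ∈ sᶜ, m i = 0 := by
      simp [subset_iff, sum_eq_zero_iff, not_imp_comm]
    simp only [hsupp, zero_pow_eq, ← sum_add_sum_compl s]
    split_ifs with h <;> simp [h]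
  have hk : k ≤ Fintype.card (Fin (d + 1)) := hp ▸ card_le_univ _
  rw [orbitMean_ite_prod_X_pow hp ha, sum_congr rfl fun s _ => hterm s, ← sum_filter, sum_const,
    card_filter_subset_powersetCard_univ hk, compl_compl, Fintype.card_fin, nsmul_eq_mul]
  ring

end TwoValued

end OrbitMean

section Symmetry

variable {n N : ℕ}

theorem exists_perm_antitone_comp {α : Type*} [LinearOrder α] (f : Fin n → α) :
    ∃ e : Equiv.Perm (Fin n), Antitone (f ∘ e) :=
  ⟨Tuple.sort (OrderDual.toDual ∘ f), Tuple.monotone_sort (OrderDual.toDual ∘ f)⟩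

theorem eq_of_forall_antitone_prod_X_pow {R M : Type*} [CommSemiring R] [AddCommMonoid M]
    [Module R M] {L L' : MvPolynomial (Fin n) R →ₗ[R] M}
    (hL : ∀ (e : Equiv.Perm (Fin n)) (m : Fin n → ℕ),
      L (∏ i, X i ^ m (e i)) = L (∏ i, X i ^ m i))
    (hL' : ∀ (e : Equiv.Perm (Fin n)) (m : Fin n → ℕ),
      L' (∏ i, X i ^ m (e i)) = L' (∏ i, X i ^ m i))
    (h : ∀ m : Fin n → ℕ, Antitone m → ∑ i, m i = N →
      L (∏ i, X i ^ m i) = L' (∏ i, X i ^ m i))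
    {f : MvPolynomial (Fin n) R} (hf : f.IsHomogeneous N) : L f = L' f := by
  have hmonomial (m : Fin n → ℕ) (hm : ∑ i, m i = N) :
      L (∏ i, X i ^ m i) = L' (∏ i, X i ^ m i) := by
    obtain ⟨e, he⟩ := exists_perm_antitone_comp m
    rw [← hL e, ← hL' e]
    exact h (m ∘ e) he ((Equiv.sum_comp e m).trans hm)
  have hexpand : f = ∑ m ∈ f.support, f.coeff m • ∏ i, X i ^ m i := by
    conv_lhs => rw [f.as_sum]
    simp [MvPolynomial.monomial_eq, MvPolynomial.smul_eq_C_mul, Finsupp.prod_fintype]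
  rw [hexpand, map_sum, map_sum]
  refine sum_congr rfl fun m hm => ?_
  have hdeg : ∑ i, m i = N := by
    rw [← Finsupp.degree_eq_sum, Finsupp.degree_eq_weight_one]
    exact hf (MvPolynomial.mem_support_iff.1 hm)
  rw [map_smul, map_smul, hmonomial m hdeg]

end Symmetry

section IndexFive

/-- The 19-point rule of index `5` on `T^3`. Its nodes are the centroid, the vertices, the edge
midpoints, the face centroids, and the midpoints between the centroid and the vertices. -/
noncomputable def cubatureT3 : MvPolynomial (Fin 4) ℝ →ₗ[ℝ] ℝ :=
  (16 / 105 : ℝ) • orbitMean 3 (fun _ => 1 / 4)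
    + (1 / 70 : ℝ) • orbitMean 3 (fun i => if (i : ℕ) = 0 then 1 else 0)
    + (4 / 35 : ℝ) • orbitMean 3 (fun i => if (i : ℕ) < 2 then 1 / 2 else 0)
    + (81 / 350 : ℝ) • orbitMean 3 (fun i => if (i : ℕ) < 3 then 1 / 3 else 0)
    + (256 / 525 : ℝ) • orbitMean 3 (fun i => if (i : ℕ) = 0 then 5 / 8 else 1 / 8)

theorem cubatureT3_prod_X_pow_perm (e : Equiv.Perm (Fin 4)) (m : Fin 4 → ℕ) :
    cubatureT3 (∏ i, X i ^ m (e i)) = cubatureT3 (∏ i, X i ^ m i) := by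
  simp only [cubatureT3, LinearMap.add_apply, LinearMap.smul_apply, orbitMean_prod_X_pow_perm]

theorem cubatureT3_prod_X_pow (m : Fin 4 → ℕ) :
    cubatureT3 (∏ i, X i ^ m i)
      = 16 / 105 * (1 / 4) ^ (∑ i, m i)
        + 1 / 280 * (#{i | m i = 0}).choose 3
        + 2 / 105 * ((1 / 2) ^ (∑ i, m i) * (#{i | m i = 0}).choose 2)
        + 81 / 1400 * ((1 / 3) ^ (∑ i, m i) * #{i | m i = 0})
        + 64 / 525 * ((1 / 8) ^ (∑ i, m i) * ∑ j, 5 ^ m j) := by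
  simp only [cubatureT3, LinearMap.add_apply, LinearMap.smul_apply, smul_eq_mul,
    orbitMean_prod_X_pow (fun _ => 1 / 4), orbitAvg_const, prod_pow_eq_pow_sum]
  rw [orbitMean_ite_zero_prod_X_pow (k := 1) (by decide) one_ne_zero,
    orbitMean_ite_zero_prod_X_pow (k := 2) (by decide) (by norm_num),
    orbitMean_ite_zero_prod_X_pow (k := 3) (by decide) (by norm_num),
    orbitMean_ite_prod_X_pow_of_card_eq_one (by decide) (by norm_num) (by norm_num)]
  have hratio : (5 / 8 / (1 / 8) : ℝ) = 5 := by norm_num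
  have hedges : Nat.choose 4 2 = 6 := rfl
  have hfaces : Nat.choose 4 3 = 4 := rfl
  simp only [hratio, hedges, hfaces, one_pow, Nat.reduceAdd, Nat.reduceSub, Nat.choose_one_right]
  push_cast
  ring

theorem mem_of_antitone_of_sum_eq_five {m : Fin 4 → ℕ} (hm : Antitone m) (hsum : ∑ i, m i = 5) :
    m ∈ ({![5, 0, 0, 0], ![4, 1, 0, 0], ![3, 2, 0, 0], ![3, 1, 1, 0], ![2, 2, 1, 0],
      ![2, 1, 1, 1]} : Finset (Fin 4 → ℕ)) := by
  have h₁ : m 1 ≤ m 0 := hm (by decide)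
  have h₂ : m 2 ≤ m 1 := hm (by decide)
  have h₃ : m 3 ≤ m 2 := hm (by decide)
  simp only [Fin.sum_univ_four] at hsum
  suffices h : ∀ v : Fin 4 → ℕ, m = v ↔ m 0 = v 0 ∧ m 1 = v 1 ∧ m 2 = v 2 ∧ m 3 = v 3 by
    simp only [mem_insert, mem_singleton, h, Matrix.cons_val]
    omega
  simp [funext_iff, Fin.forall_fin_succ]

theorem simplexMean_eq_cubatureT3_of_antitone {m : Fin 4 → ℕ} (hm : Antitone m)
    (hsum : ∑ i, m i = 5) :
    simplexMean 3 (∏ i, X i ^ m i) = cubatureT3 (∏ i, X i ^ m i) := by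
  have hpartition := mem_of_antitone_of_sum_eq_five hm hsum
  have hsimplex : simplexMean 3 (∏ i, X i ^ m i)
      = Nat.factorial 3 * ((m 0).factorial * (m 1).factorial * (m 2).factorial * (m 3).factorial
          / (5 + 3).factorial) := by
    rw [simplexMean_prod_X_pow, hsum, Fin.prod_univ_four fun i => ((m i).factorial : ℝ)]
  rw [hsimplex, cubatureT3_prod_X_pow, hsum, card_filter, Fin.sum_univ_four, Fin.sum_univ_four]
  simp only [mem_insert, mem_singleton] at hpartition
  rcases hpartition with rfl | rfl | rfl | rfl | rfl | rfl <;>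
  · simp only [Matrix.cons_val]
    norm_num [Nat.factorial, Nat.choose]

end IndexFive

/-- A 19-point positive cubature rule of index `5` with rational data on `T^3`. -/
theorem cubature_T3_index_five_rational :
    ∀ f : MvPolynomial (Fin 4) ℝ, f.IsHomogeneous 5 →
      (Nat.factorial 3 : ℝ) * ∫ x in Td 3, MvPolynomial.eval (lift 3 x) f
        = (16 / 105) * MvPolynomial.eval (fun _ => (1 / 4 : ℝ)) f
          + (1 / 70) * orbitAvg 3 (fun i => if (i : ℕ) = 0 then 1 else 0)
              (fun z => MvPolynomial.eval z f)
          + (4 / 35) * orbitAvg 3 (fun i => if (i : ℕ) < 2 then 1 / 2 else 0)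
              (fun z => MvPolynomial.eval z f)
          + (81 / 350) * orbitAvg 3 (fun i => if (i : ℕ) < 3 then 1 / 3 else 0)
              (fun z => MvPolynomial.eval z f)
          + (256 / 525) * orbitAvg 3 (fun i => if (i : ℕ) = 0 then 5 / 8 else 1 / 8)
              (fun z => MvPolynomial.eval z f) := by
  intro f hf
  have h := eq_of_forall_antitone_prod_X_pow simplexMean_prod_X_pow_perm
    cubatureT3_prod_X_pow_perm (fun _ => simplexMean_eq_cubatureT3_of_antitone) hf
  have hcenter : orbitMean 3 (fun _ => 1 / 4) f = MvPolynomial.eval (fun _ => 1 / 4) f :=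
    orbitAvg_const _ _
  rw [← hcenter]
  exact h
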